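/- arXiv:1603.00617 — 7 statements merged into one kernel-verified Lean document; each statement's English description precedes it below -/
import Mathlib

section
/- For every u ∈ V the bilinear form A^{nn} is nonnegative on the diagonal and moreover A^{nn}(u,u) ≥ (1/2)·a(u,u). (Lemma 4.1 of the paper: the lifting-stabilized Nitsche bilinear form A^{nn} is non-negative and controls the principal bilinear form a with constant 1/2.) -/
/-- Lemma 4.1 of the paper: with `N^c(u,v) := a(L v, u)` and
`A^{nn}(u,v) := a(u,v) + N^c(u,v) + N^c(v,u) + 2·a(L u, L v)`,
the form `A^{nn}` is non-negative on the diagonal and satisfies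
`A^{nn}(u,u) ≥ (1/2)·a(u,u)`. -/
theorem lifting_stabilized_form_nonneg
    {V : Type*} [AddCommGroup V] [Module ℝ V]
    (a : V →ₗ[ℝ] V →ₗ[ℝ] ℝ)
    (hsymm : ∀ u v : V, a u v = a v u)
    (hpos : ∀ u : V, 0 ≤ a u u)
    (L : V →ₗ[ℝ] V)
    (Nc : V → V → ℝ) (hNc : ∀ u v : V, Nc u v = a (L v) u)
    (Ann : V → V → ℝ)
    (hAnn : ∀ u v : V, Ann u v = a u v + Nc u v + Nc v u + 2 * a (L u) (L v))
    (u : V) :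
    0 ≤ Ann u u ∧ (1 / 2) * a u u ≤ Ann u u := by
  -- Completing the square: `Ann u u = (1/2) a(u, u) + (1/2) a(u + 2 L u, u + 2 L u)`.
  have hsq := hpos (u + (2 : ℝ) • L u)
  simp only [map_add, map_smul, LinearMap.add_apply, LinearMap.smul_apply, smul_eq_mul,
    hsymm u (L u)] at hsq
  have hu := hpos u
  rw [hAnn, hNc]
  constructor <;> linarith
end

section
/- For every u ∈ V one has A*(u,u) ≥ (1/4)·(a(u,u) + 2·a(L(u),L(u)) + s(u,u)) = (1/4)·|||u||_A². In particular the parameter-free Nitsche bilinear form A* is coercive on V with respect to the energy norm |||·||_A, with a coercivity constant independent of any stabilization parameter. (Corollary 4.2 of the paper, coercivity of the modified formulation.) -/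
/-- Corollary 4.2 of the paper: the parameter-free Nitsche bilinear form
`A*(u,v) := a(u,v) + N^c(u,v) + N^c(v,u) + 2·a(L u, L v) + s(u,v)` satisfies
`A*(u,u) ≥ (1/4)·(a(u,u) + 2·a(L u, L u) + s(u,u)) = (1/4)·|||u||_A²`. -/
theorem lifting_stabilized_form_coercive
    {V : Type*} [AddCommGroup V] [Module ℝ V]
    (a : V →ₗ[ℝ] V →ₗ[ℝ] ℝ)
    (hasymm : ∀ u v : V, a u v = a v u)
    (hapos : ∀ u : V, 0 ≤ a u u)
    (s : V →ₗ[ℝ] V →ₗ[ℝ] ℝ)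
    (hssymm : ∀ u v : V, s u v = s v u)
    (hspos : ∀ u : V, 0 ≤ s u u)
    (L : V →ₗ[ℝ] V)
    (Nc : V → V → ℝ) (hNc : ∀ u v : V, Nc u v = a (L v) u)
    (Astar : V → V → ℝ)
    (hAstar : ∀ u v : V,
      Astar u v = a u v + Nc u v + Nc v u + 2 * a (L u) (L v) + s u v)
    (u : V) :
    (1 / 4) * (a u u + 2 * a (L u) (L u) + s u u) ≤ Astar u u := by
  -- The weights 3 and 4 complete the square: `a(3u + 4Lu, 3u + 4Lu) / 12` equals
  -- `(3/4) a(u,u) + 2 a(Lu,u) + (4/3) a(Lu,Lu)`, and `4/3 ≤ 3/2` leaves room for the claim.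
  have hsq := hapos ((3 : ℝ) • u + (4 : ℝ) • L u)
  simp only [map_add, map_smul, LinearMap.add_apply, LinearMap.smul_apply, smul_eq_mul,
    hasymm u (L u)] at hsq
  rw [hAstar, hNc]
  linarith [hapos (L u), hspos u]
end

section
/- For every λ ≥ 1 the classical Nitsche bilinear form A_λ(u,v) := a(u,v) + N^c(u,v) + N^c(v,u) + λ·s(u,v) satisfies the continuity estimate |A_λ(u,v)| ≤ 2·|||u|||_λ·|||v|||_λ for all u, v ∈ V, where |||u|||_λ² := a(u,u) + b(u,u) + λ·s(u,u). (Condition (C) of the paper for the classical Nitsche formulation.) -/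
/-!
With `α = √a(u,u)`, `β = √b(u,u)`, `σ = √(λ s(u,u))` and `α₂, β₂, σ₂` for `v`, the Cauchy–Schwarz
bounds (and `s ≤ λ s`, since `λ ≥ 1`) give
`|A_λ(u,v)| ≤ αα₂ + βσ₂ + β₂σ + σσ₂ ≤ αα₂ + (β + σ)(β₂ + σ₂)`.
By Cauchy–Schwarz in `ℝ²` and `(β + σ)² ≤ 2(β² + σ²)`, the right-hand side is at most
`√(2|||u|||²) √(2|||v|||²) = 2 |||u||| |||v|||`.
-/

/-- Cauchy–Schwarz for a symmetric positive semidefinite form, in square-root form. -/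
lemma abs_form_le_sqrt_mul_sqrt {V : Type*} [AddCommGroup V] [Module ℝ V]
    (f : V →ₗ[ℝ] V →ₗ[ℝ] ℝ) (hsymm : ∀ u v : V, f u v = f v u) (hpos : ∀ u : V, 0 ≤ f u u)
    (u v : V) : |f u v| ≤ √(f u u) * √(f v v) := by
  rw [← Real.sqrt_mul (hpos u)]
  exact Real.abs_le_sqrt (LinearMap.BilinForm.apply_sq_le_of_symm f hpos ⟨hsymm⟩ u v)

/-- The scalar inequality behind the continuity estimate, for the six square roots. -/
lemma nitsche_scalar_bound {α β σ α₂ β₂ σ₂ : ℝ}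
    (hβ : 0 ≤ β) (hβ₂ : 0 ≤ β₂) :
    α * α₂ + β * σ₂ + β₂ * σ + σ * σ₂ ≤
      2 * √(α ^ 2 + β ^ 2 + σ ^ 2) * √(α₂ ^ 2 + β₂ ^ 2 + σ₂ ^ 2) := by
  have hP : α ^ 2 + (β + σ) ^ 2 ≤ 2 * (α ^ 2 + β ^ 2 + σ ^ 2) := by
    nlinarith [sq_nonneg (β - σ), sq_nonneg α]
  have hQ : α₂ ^ 2 + (β₂ + σ₂) ^ 2 ≤ 2 * (α₂ ^ 2 + β₂ ^ 2 + σ₂ ^ 2) := by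
    nlinarith [sq_nonneg (β₂ - σ₂), sq_nonneg α₂]
  have hX : α * α₂ + (β + σ) * (β₂ + σ₂) ≤
      2 * √(α ^ 2 + β ^ 2 + σ ^ 2) * √(α₂ ^ 2 + β₂ ^ 2 + σ₂ ^ 2) := by
    refine le_of_abs_le (abs_le_of_sq_le_sq ?_ (by positivity))
    rw [mul_pow, mul_pow, Real.sq_sqrt (by positivity), Real.sq_sqrt (by positivity)]
    calc (α * α₂ + (β + σ) * (β₂ + σ₂)) ^ 2
        ≤ (α ^ 2 + (β + σ) ^ 2) * (α₂ ^ 2 + (β₂ + σ₂) ^ 2) := by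
          nlinarith [sq_nonneg (α * (β₂ + σ₂) - (β + σ) * α₂)]
      _ ≤ 2 * (α ^ 2 + β ^ 2 + σ ^ 2) * (2 * (α₂ ^ 2 + β₂ ^ 2 + σ₂ ^ 2)) := by gcongr
      _ = _ := by ring
  linarith [mul_nonneg hβ hβ₂]

/-- Condition (C) of the paper for the classical Nitsche formulation: for
`λ ≥ 1` the form `A_λ` satisfies `|A_λ(u,v)| ≤ 2·|||u|||_λ·|||v|||_λ`, where
`|||u|||_λ² := a(u,u) + b(u,u) + λ·s(u,u)`. -/
theorem classical_nitsche_continuity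
    {V : Type*} [AddCommGroup V] [Module ℝ V]
    (a s b : V →ₗ[ℝ] V →ₗ[ℝ] ℝ)
    (hasymm : ∀ u v : V, a u v = a v u) (hapos : ∀ u : V, 0 ≤ a u u)
    (hssymm : ∀ u v : V, s u v = s v u) (hspos : ∀ u : V, 0 ≤ s u u)
    (hbsymm : ∀ u v : V, b u v = b v u) (hbpos : ∀ u : V, 0 ≤ b u u)
    (Nc : V →ₗ[ℝ] V →ₗ[ℝ] ℝ)
    (hNcbound : ∀ u v : V, (Nc u v) ^ 2 ≤ b u u * s v v)
    (lam : ℝ) (hlam : 1 ≤ lam)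
    (Alam : V → V → ℝ)
    (hAlam : ∀ u v : V, Alam u v = a u v + Nc u v + Nc v u + lam * s u v) :
    ∀ u v : V,
      |Alam u v| ≤ 2 * Real.sqrt (a u u + b u u + lam * s u u) *
        Real.sqrt (a v v + b v v + lam * s v v) := by
  intro u v
  have hlam0 : 0 ≤ lam := by linarith
  have hs_le : ∀ w : V, √(s w w) ≤ √(lam * s w w) := fun w =>
    Real.sqrt_le_sqrt (le_mul_of_one_le_left (hspos w) hlam)
  have hN : ∀ w z : V, |Nc w z| ≤ √(b w w) * √(lam * s z z) := fun w z =>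
    calc |Nc w z| ≤ √(b w w * s z z) := Real.abs_le_sqrt (hNcbound w z)
      _ = √(b w w) * √(s z z) := Real.sqrt_mul (hbpos w) _
      _ ≤ √(b w w) * √(lam * s z z) :=
        mul_le_mul_of_nonneg_left (hs_le z) (Real.sqrt_nonneg _)
  have ha := abs_form_le_sqrt_mul_sqrt a hasymm hapos u v
  -- Cauchy–Schwarz applied to the form `λ s`
  have hs : |lam * s u v| ≤ √(lam * s u u) * √(lam * s v v) :=
    abs_form_le_sqrt_mul_sqrt (lam • s)
      (fun w z => by simp [hssymm w z]) (fun w => mul_nonneg hlam0 (hspos w)) u v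
  have key := nitsche_scalar_bound (α := √(a u u)) (σ := √(lam * s u u)) (α₂ := √(a v v))
    (σ₂ := √(lam * s v v)) (Real.sqrt_nonneg (b u u)) (Real.sqrt_nonneg (b v v))
  rw [Real.sq_sqrt (hapos u), Real.sq_sqrt (hapos v), Real.sq_sqrt (hbpos u),
    Real.sq_sqrt (hbpos v), Real.sq_sqrt (mul_nonneg hlam0 (hspos u)),
    Real.sq_sqrt (mul_nonneg hlam0 (hspos v))] at key
  rw [hAlam]
  have h1 := abs_add_le (a u v + Nc u v + Nc v u) (lam * s u v)
  have h2 := abs_add_le (a u v + Nc u v) (Nc v u)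
  have h3 := abs_add_le (a u v) (Nc u v)
  linarith [hN u v, hN v u]
end

section
/- The modified Nitsche bilinear form A*(u,v) := a(u,v) + N^c(u,v) + N^c(v,u) + 2·a(L(u),L(v)) + s(u,v) satisfies the continuity estimate |A*(u,v)| ≤ (4 + 2·c_tr)·|||u|||·|||v||| for all u, v ∈ V, where |||u|||² := a(u,u) + b(u,u) + s(u,u). (Continuity of the parameter-free formulation with a constant depending on the trace inverse constant c_tr, Section 4.1 of the paper.) -/
/-! Each term of `A*` is at most a constant times `|||u||| |||v|||`:
Cauchy–Schwarz handles `a` and `s`, the assumed bound handles the two `N^c` terms, and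
Cauchy–Schwarz for `a` combined with lifting stability bounds `a(Lu, Lv)` by
`c_tr |||u||| |||v|||`. Summing gives `1 + 1 + 1 + 2 c_tr + 1 = 4 + 2 c_tr`. -/

/-- Cauchy–Schwarz for a symmetric positive semidefinite form. -/
lemma psd_cauchy_schwarz {V : Type*} [AddCommGroup V] [Module ℝ V]
    (a : V →ₗ[ℝ] V →ₗ[ℝ] ℝ) (hsymm : ∀ u v : V, a u v = a v u)
    (hpos : ∀ u : V, 0 ≤ a u u) (u v : V) : (a u v) ^ 2 ≤ a u u * a v v :=
  LinearMap.BilinForm.apply_sq_le_of_symm a hpos ⟨hsymm⟩ u v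

lemma abs_le_mul_sqrt_mul_sqrt {x c p q P Q : ℝ} (hc : 0 ≤ c) (hp : 0 ≤ p) (hq : 0 ≤ q)
    (hP : p ≤ P) (hQ : q ≤ Q) (h : x ^ 2 ≤ (c * p) * (c * q)) :
    |x| ≤ c * (Real.sqrt P * Real.sqrt Q) := by
  have hP0 := hp.trans hP
  apply abs_le_of_sq_le_sq _ (by positivity)
  rw [mul_pow, mul_pow, Real.sq_sqrt hP0, Real.sq_sqrt (hq.trans hQ)]
  have hpq : p * q ≤ P * Q := mul_le_mul hP hQ hq hP0
  calc x ^ 2 ≤ c ^ 2 * (p * q) := by linarith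
    _ ≤ c ^ 2 * (P * Q) := by gcongr

/-- Continuity of the parameter-free formulation (Section 4.1 of the paper):
`|A*(u,v)| ≤ (4 + 2·c_tr)·|||u|||·|||v|||`, where
`|||u|||² := a(u,u) + b(u,u) + s(u,u)`. -/
theorem modified_nitsche_continuity
    {V : Type*} [AddCommGroup V] [Module ℝ V]
    (a s b : V →ₗ[ℝ] V →ₗ[ℝ] ℝ)
    (hasymm : ∀ u v : V, a u v = a v u) (hapos : ∀ u : V, 0 ≤ a u u)
    (hssymm : ∀ u v : V, s u v = s v u) (hspos : ∀ u : V, 0 ≤ s u u)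
    (hbsymm : ∀ u v : V, b u v = b v u) (hbpos : ∀ u : V, 0 ≤ b u u)
    (L : V →ₗ[ℝ] V)
    (Nc : V → V → ℝ) (hNc : ∀ u v : V, Nc u v = a (L v) u)
    (hNcbound : ∀ u v : V, (Nc u v) ^ 2 ≤ b u u * s v v)
    (ctr : ℝ) (hctr : 0 < ctr)
    (hlift : ∀ w : V, a (L w) (L w) ≤ ctr * s w w)
    (Astar : V → V → ℝ)
    (hAstar : ∀ u v : V,
      Astar u v = a u v + Nc u v + Nc v u + 2 * a (L u) (L v) + s u v) :
    ∀ u v : V,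
      |Astar u v| ≤ (4 + 2 * ctr) * Real.sqrt (a u u + b u u + s u u) *
        Real.sqrt (a v v + b v v + s v v) := by
  intro u v
  have hau := hapos u
  have hav := hapos v
  have hsu := hspos u
  have hsv := hspos v
  have hbu := hbpos u
  have hbv := hbpos v
  have h1 := abs_le_mul_sqrt_mul_sqrt (x := a u v) (P := a u u + b u u + s u u)
    (Q := a v v + b v v + s v v) zero_le_one hau hav (by linarith) (by linarith)
    (by simpa using psd_cauchy_schwarz a hasymm hapos u v)
  have h2 := abs_le_mul_sqrt_mul_sqrt (x := Nc u v) (P := a u u + b u u + s u u)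
    (Q := a v v + b v v + s v v) zero_le_one hbu hsv (by linarith) (by linarith)
    (by simpa using hNcbound u v)
  have h3 := abs_le_mul_sqrt_mul_sqrt (x := Nc v u) (P := a u u + b u u + s u u)
    (Q := a v v + b v v + s v v) zero_le_one hsu hbv (by linarith) (by linarith)
    (by simpa [mul_comm] using hNcbound v u)
  have h4 := abs_le_mul_sqrt_mul_sqrt (x := a (L u) (L v)) (P := a u u + b u u + s u u)
    (Q := a v v + b v v + s v v) hctr.le hsu hsv (by linarith) (by linarith)
    ((psd_cauchy_schwarz a hasymm hapos (L u) (L v)).trans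
      (mul_le_mul (hlift u) (hlift v) (hapos _) (by positivity)))
  have h5 := abs_le_mul_sqrt_mul_sqrt (x := s u v) (P := a u u + b u u + s u u)
    (Q := a v v + b v v + s v v) zero_le_one hsu hsv (by linarith) (by linarith)
    (by simpa using psd_cauchy_schwarz s hssymm hspos u v)
  rw [hAstar]
  rw [abs_le] at *
  constructor <;> linarith
end

section
/- For every linear functional F on V there exists a unique w ∈ V such that a(w,v) + k(w,v) = F(v) for all v ∈ V. (Unique solvability of the regularized element-local lifting problem (eq:local) of the paper.) -/
/-!
The form `b(w,v) = a(w,v) + c·l(w)·l(v)` is positive definite: `b(w,w) = 0` forces both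
`a(w,w) = 0`, hence `w = t • e`, and `l(w) = t·l(e) = 0`, hence `t = 0`. So `w ↦ b(w,·)` is
injective from `V` to its dual, and therefore bijective since the dimensions agree.
-/

/-- Unique solvability of the regularized element-local lifting problem
(eq:local) of the paper: for every linear functional `F` there is a unique `w`
with `a(w,v) + c·ℓ(w)·ℓ(v) = F(v)` for all `v`. -/
theorem regularized_lifting_unique_solvability
    {V : Type*} [AddCommGroup V] [Module ℝ V] [FiniteDimensional ℝ V]
    (a : V →ₗ[ℝ] V →ₗ[ℝ] ℝ)
    (hsymm : ∀ u v : V, a u v = a v u)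
    (hpos : ∀ u : V, 0 ≤ a u u)
    (e : V)
    (hker : ∀ v : V, a v v = 0 → ∃ t : ℝ, v = t • e)
    (l : V →ₗ[ℝ] ℝ) (hle : l e ≠ 0)
    (c : ℝ) (hc : 0 < c)
    (F : V →ₗ[ℝ] ℝ) :
    ∃! w : V, ∀ v : V, a w v + c * l w * l v = F v := by
  let b : V →ₗ[ℝ] Module.Dual ℝ V := a + (c • l).smulRight l
  have hb : ∀ w v, b w v = a w v + c * l w * l v := fun w v => by simp [b]
  have hinj : Function.Injective b := by
    rw [← LinearMap.ker_eq_bot, LinearMap.ker_eq_bot']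
    intro w hw
    have h0 : a w w + c * l w * l w = 0 := by rw [← hb, hw, LinearMap.zero_apply]
    have hl : 0 ≤ c * l w * l w := by
      rw [mul_assoc]
      exact mul_nonneg hc.le (mul_self_nonneg _)
    have ha : a w w = 0 := by linarith [hpos w]
    have hlw : l w = 0 := by
      have : c * l w * l w = 0 := by linarith
      simpa [hc.ne'] using this
    obtain ⟨t, rfl⟩ := hker w ha
    have ht : t = 0 := by simpa [hle] using hlw
    simp [ht]
  have hsurj : Function.Surjective b :=
    (LinearMap.injective_iff_surjective_of_finrank_eq_finrank
      (Subspace.dual_finrank_eq (K := ℝ) (V := V)).symm).mp hinj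
  obtain ⟨w, hw⟩ := hsurj F
  refine ⟨w, fun v => by rw [← hb, hw], fun w' hw' => hinj ?_⟩
  rw [hw]
  ext v
  rw [hb, hw' v]
end

section
/- Suppose u ∈ V and u_h ∈ S satisfy the Galerkin orthogonality A*(u − u_h, v) = 0 for all v ∈ S. Then |||u − u_h||| ≤ (1 + 4·(4 + 2·c_tr)·(1 + c_tr)) · |||u − v_h||| for every v_h ∈ S. (Quasi-optimality of the parameter-free (lifting-stabilized) symmetric Nitsche formulation: the error bound holds with a constant depending only on the trace inverse constant c_tr, and no stabilization parameter λ appears.) -/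
/-!
The form `A*` is coercive on `S` and bounded on `V` for the seminorm `|||·|||`, and quasi-optimality
follows as in Céa's lemma. Coercivity rests on the identity
`A*(w,w) = a(w,w)/2 + 2 a(w/2 + L w, w/2 + L w) + s(w,w)`, so that
`A*(w,w) ≥ (a(w,w) + s(w,w))/2`; the trace inequality then gives
`|||w|||² ≤ 2 (1 + c_tr) A*(w,w)` for `w ∈ S`. Each of the five terms of `A*` is bounded by
Cauchy–Schwarz, with total constant `4 + 2 c_tr`. Applying both to `w = v_h - u_h` and using
`A*(w,w) = -A*(u - v_h, w)` bounds `|||v_h - u_h|||`, and the triangle inequality finishes the proof.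
-/

/-- Cauchy–Schwarz for a symmetric positive semidefinite form. -/
lemma psd_sq_le {V : Type*} [AddCommGroup V] [Module ℝ V] (q : V →ₗ[ℝ] V →ₗ[ℝ] ℝ)
    (hsymm : ∀ u v : V, q u v = q v u) (hpos : ∀ u : V, 0 ≤ q u u) (x y : V) :
    (q x y) ^ 2 ≤ q x x * q y y := by
  have h := LinearMap.BilinForm.apply_mul_apply_le_of_forall_zero_le q hpos x y
  rw [hsymm y x] at h
  nlinarith [h]

lemma le_mul_of_sq_le {x p r k E W : ℝ} (hx : x ^ 2 ≤ p * r) (hr : 0 ≤ r)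
    (hk : 0 ≤ k) (hE : 0 ≤ E) (hW : 0 ≤ W) (hpE : p ≤ k * E ^ 2) (hrW : r ≤ k * W ^ 2) :
    x ≤ k * (E * W) := by
  refine (abs_le_of_sq_le_sq' ?_ (by positivity)).2
  calc x ^ 2 ≤ p * r := hx
    _ ≤ (k * E ^ 2) * (k * W ^ 2) := mul_le_mul hpE hrW hr (by positivity)
    _ = (k * (E * W)) ^ 2 := by ring

/-- Triangle inequality for the seminorm of a symmetric positive semidefinite form. -/
lemma psd_sqrt_add_le {V : Type*} [AddCommGroup V] [Module ℝ V] (q : V →ₗ[ℝ] V →ₗ[ℝ] ℝ)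
    (hsymm : ∀ u v : V, q u v = q v u) (hpos : ∀ u : V, 0 ≤ q u u) (x y : V) :
    √(q (x + y) (x + y)) ≤ √(q x x) + √(q y y) := by
  have hxy : q x y ≤ 1 * (√(q x x) * √(q y y)) :=
    le_mul_of_sq_le (psd_sq_le q hsymm hpos x y) (hpos y) zero_le_one (Real.sqrt_nonneg _)
      (Real.sqrt_nonneg _) (by rw [Real.sq_sqrt (hpos x), one_mul])
      (by rw [Real.sq_sqrt (hpos y), one_mul])
  refine Real.sqrt_le_iff.2 ⟨by positivity, ?_⟩
  have hexp : q (x + y) (x + y) = q x x + 2 * q x y + q y y := by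
    simp only [map_add, LinearMap.add_apply]
    rw [hsymm y x]
    ring
  rw [hexp, add_sq, Real.sq_sqrt (hpos x), Real.sq_sqrt (hpos y)]
  linarith

/-- Quasi-optimality of the parameter-free (lifting-stabilized) symmetric
Nitsche formulation: Galerkin orthogonality for `A*` implies
`|||u − u_h||| ≤ (1 + 4·(4 + 2·c_tr)·(1 + c_tr)) · |||u − v_h|||`,
with a constant depending only on the trace inverse constant `c_tr`. -/
theorem modified_nitsche_quasi_optimality
    {V : Type*} [AddCommGroup V] [Module ℝ V]
    (S : Submodule ℝ V)
    (a s b : V →ₗ[ℝ] V →ₗ[ℝ] ℝ)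
    (hasymm : ∀ u v : V, a u v = a v u) (hapos : ∀ u : V, 0 ≤ a u u)
    (hssymm : ∀ u v : V, s u v = s v u) (hspos : ∀ u : V, 0 ≤ s u u)
    (hbsymm : ∀ u v : V, b u v = b v u) (hbpos : ∀ u : V, 0 ≤ b u u)
    (L : V →ₗ[ℝ] V)
    (Nc : V → V → ℝ) (hNc : ∀ u v : V, Nc u v = a (L v) u)
    (ctr : ℝ) (hctr : 0 < ctr)
    (hNcbound : ∀ u v : V, (Nc u v) ^ 2 ≤ b u u * s v v)
    (hlift : ∀ w : V, a (L w) (L w) ≤ ctr * s w w)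
    (htrace : ∀ v ∈ S, b v v ≤ ctr * a v v)
    (Astar : V → V → ℝ)
    (hAstar : ∀ u v : V,
      Astar u v = a u v + Nc u v + Nc v u + 2 * a (L u) (L v) + s u v)
    (u uh : V) (huh : uh ∈ S)
    (hgal : ∀ v ∈ S, Astar (u - uh) v = 0)
    (vh : V) (hvh : vh ∈ S) :
    Real.sqrt (a (u - uh) (u - uh) + b (u - uh) (u - uh) + s (u - uh) (u - uh))
      ≤ (1 + 4 * (4 + 2 * ctr) * (1 + ctr)) *
        Real.sqrt (a (u - vh) (u - vh) + b (u - vh) (u - vh) +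
          s (u - vh) (u - vh)) := by
  have htri : √((a + b + s) (u - uh) (u - uh)) ≤
      √((a + b + s) (u - vh) (u - vh)) + √((a + b + s) (vh - uh) (vh - uh)) := by
    have h := psd_sqrt_add_le (a + b + s)
      (fun x y => by
        simp only [LinearMap.add_apply]
        rw [hasymm x y, hbsymm x y, hssymm x y])
      (fun x => add_nonneg (add_nonneg (hapos x) (hbpos x)) (hspos x)) (u - vh) (vh - uh)
    rwa [sub_add_sub_cancel] at h
  simp only [LinearMap.add_apply] at htri
  have hwS : vh - uh ∈ S := S.sub_mem hvh huh
  have hsplit : u - uh = (u - vh) + (vh - uh) := (sub_add_sub_cancel _ _ _).symm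
  have hg := hgal _ hwS
  -- From here on, `e = u - v_h` and `w = v_h - u_h`, with seminorms `E` and `W`.
  rw [hsplit] at hg
  generalize vh - uh = w at *
  generalize u - vh = e at *
  have hE2 : √(a e e + b e e + s e e) ^ 2 = a e e + b e e + s e e :=
    Real.sq_sqrt (add_nonneg (add_nonneg (hapos e) (hbpos e)) (hspos e))
  have hW2 : √(a w w + b w w + s w w) ^ 2 = a w w + b w w + s w w :=
    Real.sq_sqrt (add_nonneg (add_nonneg (hapos w) (hbpos w)) (hspos w))
  have hE := Real.sqrt_nonneg (a e e + b e e + s e e)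
  have hW := Real.sqrt_nonneg (a w w + b w w + s w w)
  generalize √(a e e + b e e + s e e) = E at *
  generalize √(a w w + b w w + s w w) = W at *
  have hae := hapos e
  have hbe := hbpos e
  have hse := hspos e
  have haw := hapos w
  have hbw := hbpos w
  have hsw := hspos w
  have hAe : -Astar e w = Astar w w := by
    simp only [hAstar, hNc, map_add, LinearMap.add_apply] at hg ⊢
    linarith
  have hcoer : a w w + s w w ≤ 2 * Astar w w := by
    have h := hapos ((1 / 2 : ℝ) • w + L w)
    simp only [map_add, map_smul, LinearMap.add_apply, LinearMap.smul_apply, smul_eq_mul] at h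
    rw [hasymm w (L w)] at h
    rw [hAstar, hNc]
    linarith
  have hnorm : W ^ 2 ≤ 2 * (1 + ctr) * Astar w w := by
    have h1 := htrace w hwS
    have h2 := mul_le_mul_of_nonneg_left hcoer (by positivity : 0 ≤ 1 + ctr)
    have h3 := mul_nonneg hctr.le hsw
    linarith
  have hcont : -Astar e w ≤ (4 + 2 * ctr) * (E * W) := by
    have h1 : -a e w ≤ 1 * (E * W) :=
      le_mul_of_sq_le (by rw [neg_sq]; exact psd_sq_le a hasymm hapos e w) haw zero_le_one hE hW
        (by linarith) (by linarith)
    have h2 : -Nc e w ≤ 1 * (E * W) :=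
      le_mul_of_sq_le (by rw [neg_sq]; exact hNcbound e w) hsw zero_le_one hE hW
        (by linarith) (by linarith)
    have h3 : -Nc w e ≤ 1 * (W * E) :=
      le_mul_of_sq_le (by rw [neg_sq]; exact hNcbound w e) hse zero_le_one hW hE
        (by linarith) (by linarith)
    have h4 : -a (L e) (L w) ≤ ctr * (E * W) :=
      le_mul_of_sq_le (by rw [neg_sq]; exact psd_sq_le a hasymm hapos (L e) (L w)) (hapos _)
        hctr.le hE hW
        ((hlift e).trans (mul_le_mul_of_nonneg_left (by linarith) hctr.le))
        ((hlift w).trans (mul_le_mul_of_nonneg_left (by linarith) hctr.le))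
    have h5 : -s e w ≤ 1 * (E * W) :=
      le_mul_of_sq_le (by rw [neg_sq]; exact psd_sq_le s hssymm hspos e w) hsw zero_le_one hE hW
        (by linarith) (by linarith)
    rw [hAstar]
    linarith
  have hWE : W ≤ 2 * (1 + ctr) * (4 + 2 * ctr) * E := by
    rcases hW.eq_or_lt with h0 | h0
    · rw [← h0]
      positivity
    · refine le_of_mul_le_mul_right ?_ h0
      have h2 := mul_le_mul_of_nonneg_left (hAe ▸ hcont) (by positivity : 0 ≤ 2 * (1 + ctr))
      linarith
  -- The argument yields the factor `2` where the claim allows `4`.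
  have hslack : 0 ≤ (1 + ctr) * (4 + 2 * ctr) * E := by positivity
  linarith
end

section
/- Let λ ≥ max(1, 16·c_tr) and suppose u ∈ V and u_h ∈ S satisfy the Galerkin orthogonality A_λ(u − u_h, v) = 0 for all v ∈ S. Then |||u − u_h|||_λ ≤ (5 + 4·c_tr) · |||u − v_h|||_λ for every v_h ∈ S. (Quasi-optimality of the classical symmetric Nitsche formulation for sufficiently large stabilization parameter λ, with a quasi-optimality constant independent of λ.) -/
/-!
Write `e = u - vh` and `w = uh - vh ∈ S`, so that `u - uh = e - w` and Galerkin orthogonality gives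
`A(w,w) = A(e,w)`. Put `m² = a(w,w) + λ s(w,w)` and `E² = |||e|||²`.

* Coercivity: the trace inequality and `λ ≥ 16 c_tr` give `2 |Nc(w,w)| ≤ m² / 4`, hence
  `A(w,w) ≥ (3/4) m²`.
* Continuity: Young's inequality applied to each of the four terms gives
  `A(e,w) ≤ (3/8) m² + (3/2) E²`.

Thus `m² ≤ 4 E²`, and `|||w|||² ≤ (1 + c_tr) m² ≤ (2 + c_tr)² E²` by the trace inequality again.
The triangle inequality yields the constant `3 + c_tr ≤ 5 + 4 c_tr`.
-/

/-- Weighted Young inequality for a positive semidefinite form. The weight is the one for which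
two terms of this kind use up `3/8`, half of the coercivity constant `3/4`. -/
lemma psd_young {V : Type*} [AddCommGroup V] [Module ℝ V] (a : V →ₗ[ℝ] V →ₗ[ℝ] ℝ)
    (hsymm : ∀ u v : V, a u v = a v u) (hpos : ∀ u : V, 0 ≤ a u u) (e w : V) :
    a e w ≤ 4 / 3 * a e e + 3 / 16 * a w w := by
  have h := hpos (e - (3 / 8 : ℝ) • w)
  simp only [map_sub, map_smul, LinearMap.sub_apply, LinearMap.smul_apply, smul_eq_mul] at h
  rw [hsymm w e] at h
  linarith

/-- Triangle inequality for the seminorm of a positive semidefinite form, in squared form. -/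
lemma psd_triangle {V : Type*} [AddCommGroup V] [Module ℝ V] (T : V →ₗ[ℝ] V →ₗ[ℝ] ℝ)
    (hsymm : ∀ u v : V, T u v = T v u) (hpos : ∀ u : V, 0 ≤ T u u) (e w : V) (q : ℝ)
    (hq : 0 < q) (hw : T w w ≤ q ^ 2 * T e e) :
    T (e - w) (e - w) ≤ (1 + q) ^ 2 * T e e := by
  have h := hpos (q • e + w)
  simp only [map_add, map_sub, map_smul, LinearMap.add_apply, LinearMap.sub_apply,
    LinearMap.smul_apply, smul_eq_mul] at h ⊢
  rw [hsymm w e] at h ⊢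
  have h1 : (1 + q) * T w w ≤ (1 + q) * (q ^ 2 * T e e) :=
    mul_le_mul_of_nonneg_left hw (by linarith)
  refine le_of_mul_le_mul_left ?_ hq
  linarith

/-- Quasi-optimality of the classical symmetric Nitsche formulation for
sufficiently large stabilization parameter `λ ≥ max(1, 16·c_tr)`:
`|||u − u_h|||_λ ≤ (5 + 4·c_tr) · |||u − v_h|||_λ`, with a quasi-optimality
constant independent of `λ`. -/
theorem classical_nitsche_quasi_optimality
    {V : Type*} [AddCommGroup V] [Module ℝ V]
    (S : Submodule ℝ V)
    (a s b : V →ₗ[ℝ] V →ₗ[ℝ] ℝ)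
    (hasymm : ∀ u v : V, a u v = a v u) (hapos : ∀ u : V, 0 ≤ a u u)
    (hssymm : ∀ u v : V, s u v = s v u) (hspos : ∀ u : V, 0 ≤ s u u)
    (hbsymm : ∀ u v : V, b u v = b v u) (hbpos : ∀ u : V, 0 ≤ b u u)
    (Nc : V →ₗ[ℝ] V →ₗ[ℝ] ℝ)
    (ctr : ℝ) (hctr : 0 < ctr)
    (hNcbound : ∀ u v : V, (Nc u v) ^ 2 ≤ b u u * s v v)
    (htrace : ∀ v ∈ S, b v v ≤ ctr * a v v)
    (lam : ℝ) (hlam : max 1 (16 * ctr) ≤ lam)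
    (Alam : V → V → ℝ)
    (hAlam : ∀ u v : V, Alam u v = a u v + Nc u v + Nc v u + lam * s u v)
    (u uh : V) (huh : uh ∈ S)
    (hgal : ∀ v ∈ S, Alam (u - uh) v = 0)
    (vh : V) (hvh : vh ∈ S) :
    Real.sqrt (a (u - uh) (u - uh) + b (u - uh) (u - uh) +
        lam * s (u - uh) (u - uh))
      ≤ (5 + 4 * ctr) *
        Real.sqrt (a (u - vh) (u - vh) + b (u - vh) (u - vh) +
          lam * s (u - vh) (u - vh)) := by
  obtain ⟨h1, h16⟩ := max_le_iff.mp hlam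
  have hw : uh - vh ∈ S := S.sub_mem huh hvh
  have hsub : u - uh = (u - vh) - (uh - vh) := by abel
  have hg := hgal _ hw
  rw [hAlam, hsub] at hg
  rw [hsub]
  generalize u - vh = e at *
  generalize uh - vh = w at *
  have hbw := htrace w hw
  have haw := hapos w
  have hbe := hbpos e
  have hae := hapos e
  have hsw := hspos w
  have hse := hspos e
  have hlam0 : 0 ≤ lam := by linarith
  have hlsw : 0 ≤ lam * s w w := mul_nonneg hlam0 hsw
  have hlse : 0 ≤ lam * s e e := mul_nonneg hlam0 hse
  -- Since `c_tr ≤ λ / 16`, a factor `b(w,w)` costs only `a(w,w) / 16` once `λ` is absorbed in `s`.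
  have hNw : ∀ v, (Nc w v) ^ 2 ≤ a w w * (lam * s v v) / 16 := by
    intro v
    have hbw' : b w w ≤ lam / 16 * a w w :=
      hbw.trans (mul_le_mul_of_nonneg_right (by linarith) haw)
    have := mul_le_mul_of_nonneg_right hbw' (hspos v)
    linarith [hNcbound w v]
  have hcoer : -((a w w + lam * s w w) / 8) ≤ Nc w w := by
    refine (abs_le_of_sq_le_sq' ?_ (by linarith)).1
    nlinarith [hNw w, sq_nonneg (a w w - lam * s w w)]
  have hN1 : Nc e w ≤ 4 / 3 * b e e + 3 / 16 * (lam * s w w) := by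
    refine abs_le_of_sq_le_sq' ?_ (by linarith) |>.2
    have h2 : b e e * s w w ≤ b e e * (lam * s w w) :=
      mul_le_mul_of_nonneg_left (le_mul_of_one_le_left hsw h1) hbe
    nlinarith [hNcbound e w, sq_nonneg (4 / 3 * b e e - 3 / 16 * (lam * s w w))]
  have hN2 : Nc w e ≤ 1 / 12 * (lam * s e e) + 3 / 16 * a w w := by
    refine abs_le_of_sq_le_sq' ?_ (by linarith) |>.2
    nlinarith [hNw e, sq_nonneg (1 / 12 * (lam * s e e) - 3 / 16 * a w w)]
  have ha := psd_young a hasymm hapos e w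
  have hs := mul_le_mul_of_nonneg_left (psd_young s hssymm hspos e w) hlam0
  simp only [map_sub, LinearMap.sub_apply] at hg
  have hm : a w w + lam * s w w ≤ 4 * (a e e + b e e + lam * s e e) := by linarith
  have hT : ∀ x y, (a + b + lam • s) x y = a x y + b x y + lam * s x y := fun x y => by simp
  have hE : 0 ≤ a e e + b e e + lam * s e e := by linarith
  have htri := psd_triangle (a + b + lam • s)
    (fun x y => by rw [hT, hT, hasymm, hbsymm, hssymm])
    (fun x => by
      rw [hT]
      linarith [hapos x, hbpos x, mul_nonneg hlam0 (hspos x)])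
    e w (2 + ctr) (by linarith) (by
      rw [hT, hT]
      have h3 := mul_le_mul_of_nonneg_left hm (by linarith : 0 ≤ 1 + ctr)
      have h4 := mul_nonneg hctr.le hlsw
      have h5 := mul_nonneg (sq_nonneg ctr) hE
      linarith)
  rw [hT, hT] at htri
  have hc : 0 ≤ 5 + 4 * ctr := by linarith
  refine Real.sqrt_le_iff.mpr ⟨mul_nonneg hc (Real.sqrt_nonneg _), ?_⟩
  rw [mul_pow, Real.sq_sqrt hE]
  refine htri.trans (mul_le_mul_of_nonneg_right ?_ hE)
  exact pow_le_pow_left₀ (by linarith) (by linarith) 2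
end
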